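/- A density matrix ρ on ℂ² ⊗ ℂ² is separable if and only if ρ¹ ⊗ I₂ − ρ is positive semidefinite, where ρ¹ is the partial trace of ρ over the second factor and I₂ is the 2×2 identity (the reduction criterion for two qubits). -/

import Mathlib

open scoped ComplexOrder Kronecker

noncomputable section

/-- A density matrix: positive semidefinite with trace one. -/
def IsDensity {ι : Type*} [Fintype ι] (ρ : Matrix ι ι ℂ) : Prop :=
  ρ.PosSemidef ∧ ρ.trace = 1

/-- A separable state: a finite convex combination of tensor products of density
matrices; a non-separable density matrix is entangled. -/
def Separable {m n : ℕ} (ρ : Matrix (Fin m × Fin n) (Fin m × Fin n) ℂ) : Prop :=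
  ∃ (k : ℕ) (lam : Fin k → ℝ) (ρ1 : Fin k → Matrix (Fin m) (Fin m) ℂ)
    (ρ2 : Fin k → Matrix (Fin n) (Fin n) ℂ),
    (∀ i, 0 ≤ lam i) ∧ (∑ i, lam i = 1) ∧
    (∀ i, IsDensity (ρ1 i)) ∧ (∀ i, IsDensity (ρ2 i)) ∧
    ρ = ∑ i, (lam i : ℂ) • (ρ1 i ⊗ₖ ρ2 i)

/-- The partial trace over the second tensor factor. -/
def ptrace2 {m n : ℕ} (ρ : Matrix (Fin m × Fin n) (Fin m × Fin n) ℂ) :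
    Matrix (Fin m) (Fin m) ℂ :=
  Matrix.of fun i j => ∑ k, ρ (i, k) (j, k)


open Matrix

abbrev M2 := Matrix (Fin 2) (Fin 2) ℂ
abbrev M4 := Matrix (Fin 2 × Fin 2) (Fin 2 × Fin 2) ℂ

/-- Unnormalised separable cone. -/
def Sp (ρ : M4) : Prop :=
  ∃ (ι : Type) (_ : Fintype ι) (P Q : ι → M2),
    (∀ i, (P i).PosSemidef) ∧ (∀ i, (Q i).PosSemidef) ∧ ρ = ∑ i, P i ⊗ₖ Q i

def blk (A B C : M2) : M4 :=
  Matrix.of fun p q => ((!![A, B; Bᴴ, C] : Matrix (Fin 2) (Fin 2) M2) p.1 q.1) p.2 q.2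

lemma Sp.add {ρ σ : M4} (h : Sp ρ) (h' : Sp σ) : Sp (ρ + σ) := by
  obtain ⟨ι, _, P, Q, hP, hQ, rfl⟩ := h
  obtain ⟨κ, _, P', Q', hP', hQ', rfl⟩ := h'
  refine ⟨ι ⊕ κ, inferInstance, Sum.elim P P', Sum.elim Q Q', ?_, ?_, ?_⟩
  · rintro (i | i)
    · exact hP i
    · exact hP' i
  · rintro (i | i)
    · exact hQ i
    · exact hQ' i
  · simp

lemma Sp.prod {P Q : M2} (hP : P.PosSemidef) (hQ : Q.PosSemidef) : Sp (P ⊗ₖ Q) :=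
  ⟨Unit, inferInstance, fun _ => P, fun _ => Q, fun _ => hP, fun _ => hQ, by simp⟩

lemma Sp.conj {ρ : M4} (h : Sp ρ) (X Y : M2) : Sp ((X ⊗ₖ Y) * ρ * (X ⊗ₖ Y)ᴴ) := by
  obtain ⟨ι, _, P, Q, hP, hQ, rfl⟩ := h
  refine ⟨ι, inferInstance, fun i => X * P i * Xᴴ, fun i => Y * Q i * Yᴴ,
    fun i => (hP i).mul_mul_conjTranspose_same X, fun i => (hQ i).mul_mul_conjTranspose_same Y, ?_⟩
  simp only [Matrix.mul_sum, Matrix.sum_mul, Matrix.mul_kronecker_mul, conjTranspose_kronecker]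

lemma Sp.swap {ρ : M4} (h : Sp (ρ.submatrix Prod.swap Prod.swap)) : Sp ρ := by
  obtain ⟨ι, _, P, Q, hP, hQ, h⟩ := h
  refine ⟨ι, inferInstance, Q, P, hQ, hP, ?_⟩
  ext ⟨i, k⟩ ⟨j, l⟩
  have := congrFun (congrFun h (k, i)) (l, j)
  simpa [Matrix.sum_apply, mul_comm] using this

lemma psd_density {P : M2} (hP : P.PosSemidef) :
    ∃ (t : ℝ) (D : M2), 0 ≤ t ∧ IsDensity D ∧ P = (t : ℂ) • D := by
  by_cases h : P.trace = 0
  · refine ⟨0, (1 / 2 : ℂ) • 1, le_rfl, ⟨PosSemidef.one.smul (by rw [Complex.le_def]; norm_num), by simp⟩, ?_⟩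
    rw [hP.trace_eq_zero_iff.1 h]; simp
  · have h0 := hP.trace_nonneg
    obtain ⟨h1, h2⟩ := Complex.nonneg_iff.1 h0
    have ht : P.trace = ((P.trace.re : ℝ) : ℂ) := Complex.ext rfl (by simp [← h2])
    refine ⟨P.trace.re, P.trace⁻¹ • P, h1, ⟨hP.smul (inv_nonneg.2 h0), ?_⟩, ?_⟩
    · simp [h]
    · rw [← ht, smul_smul, mul_inv_cancel₀ h, one_smul]

lemma Sp.separable {ρ : M4} (h : Sp ρ) (ht : ρ.trace = 1) : Separable ρ := by
  obtain ⟨ι, _, P, Q, hP, hQ, rfl⟩ := h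
  choose s D hs hD hPD using fun i => psd_density (hP i)
  choose t E ht0 hE hQE using fun i => psd_density (hQ i)
  let e := (Fintype.equivFin ι).symm
  refine ⟨Fintype.card ι, fun i => s (e i) * t (e i), fun i => D (e i), fun i => E (e i),
    fun i => mul_nonneg (hs _) (ht0 _), ?_, fun i => hD _, fun i => hE _, ?_⟩
  · rw [e.sum_comp (fun i => s i * t i)]
    have : ∀ i, (P i ⊗ₖ Q i).trace = ((s i * t i : ℝ) : ℂ) := by
      intro i
      rw [trace_kronecker, hPD, hQE, trace_smul, trace_smul, (hD i).2, (hE i).2]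
      simp
    rw [trace_sum, Finset.sum_congr rfl fun i _ => this i] at ht
    exact_mod_cast ht
  · rw [e.sum_comp (fun i => ((s i * t i : ℝ) : ℂ) • (D i ⊗ₖ E i))]
    refine Finset.sum_congr rfl fun i _ => ?_
    rw [hPD, hQE, smul_kronecker, kronecker_smul, smul_smul]
    simp

lemma blk_conj (G A B C : M2) :
    ((1 : M2) ⊗ₖ G) * blk A B C * ((1 : M2) ⊗ₖ G)ᴴ = blk (G * A * Gᴴ) (G * B * Gᴴ) (G * C * Gᴴ) := by
  ext ⟨i, k⟩ ⟨j, l⟩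
  fin_cases i <;> fin_cases j <;>
  simp [blk, Matrix.mul_apply, Fintype.sum_prod_type, Fin.sum_univ_two, Matrix.one_apply] <;> ring

lemma blk_conj1 (t : ℂ) (B C : M2) :
    (!![1, 0; t, 1] ⊗ₖ (1 : M2)) * blk 1 B C * (!![1, 0; t, 1] ⊗ₖ (1 : M2))ᴴ =
      blk 1 (B + (star t) • 1) (C + t • B + star t • Bᴴ + (t * star t) • 1) := by
  ext ⟨i, k⟩ ⟨j, l⟩
  fin_cases i <;> fin_cases j <;> fin_cases k <;> fin_cases l <;>
  simp [blk, Matrix.mul_apply, Fintype.sum_prod_type, Fin.sum_univ_two, Matrix.one_apply] <;> ring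

lemma blk_psd (A B C : M2) :
    (blk A B C).PosSemidef ↔ (fromBlocks A B Bᴴ C).PosSemidef := by
  let e : Fin 2 ⊕ Fin 2 ≃ Fin 2 × Fin 2 :=
    ⟨Sum.elim (fun k => (0, k)) (fun k => (1, k)),
     fun p => if p.1 = 0 then Sum.inl p.2 else Sum.inr p.2,
     by rintro (i | i) <;> simp, by rintro ⟨i, k⟩; fin_cases i <;> simp⟩
  rw [← posSemidef_submatrix_equiv e]
  have : (blk A B C).submatrix e e = fromBlocks A B Bᴴ C := by
    ext (i | i) (j | j) <;> simp [blk, e]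
  rw [this]

lemma blk_schur {A : M2} (hA : A.PosDef) (B C : M2) :
    (blk A B C).PosSemidef ↔ (C - Bᴴ * A⁻¹ * B).PosSemidef := by
  rw [blk_psd]
  have := hA.isUnit.invertible
  exact PosDef.fromBlocks₁₁ B C hA

lemma blk_schur1 (B C : M2) :
    (blk 1 B C).PosSemidef ↔ (C - Bᴴ * B).PosSemidef := by
  rw [blk_schur PosDef.one]; simp

lemma diag2 (x y : ℂ) : (diagonal ![x, y] : M2) = !![x, 0; 0, y] := by
  ext i j; fin_cases i <;> fin_cases j <;> simp

lemma psd2 {a d : ℝ} {c : ℂ} (ha : 0 ≤ a) (hd : 0 ≤ d) (h : Complex.normSq c ≤ a * d) :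
    (!![(a : ℂ), c; star c, (d : ℂ)] : M2).PosSemidef := by
  rcases ha.eq_or_lt with rfl | ha
  · have : c = 0 := by
      rw [zero_mul] at h
      exact Complex.normSq_eq_zero.1 (le_antisymm h (Complex.normSq_nonneg _))
    subst this
    have : (!![((0:ℝ) : ℂ), 0; star 0, (d : ℂ)] : M2) = diagonal ![0, (d : ℂ)] := by
      ext i j; fin_cases i <;> fin_cases j <;> simp
    rw [this, posSemidef_diagonal_iff]
    intro i; fin_cases i <;> simp [hd]
  · have h1 : (diagonal ![(a : ℂ), ((d - Complex.normSq c / a : ℝ) : ℂ)] : M2).PosSemidef := by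
      rw [posSemidef_diagonal_iff]
      have : Complex.normSq c / a ≤ d := by rw [div_le_iff₀ ha]; linarith
      intro i; fin_cases i
      · simp [ha.le]
      · show (0:ℂ) ≤ ((d - Complex.normSq c / a : ℝ) : ℂ)
        exact_mod_cast sub_nonneg.2 this
    have h2 := h1.mul_mul_conjTranspose_same !![1, 0; star c / a, 1]
    rw [diag2] at h2
    convert h2 using 1
    have ha' : (a : ℂ) ≠ 0 := by exact_mod_cast ha.ne'
    have hn : ((Complex.normSq c : ℝ) : ℂ) = star c * c := Complex.normSq_eq_conj_mul_self
    ext i j; fin_cases i <;> fin_cases j <;>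
      simp [Matrix.mul_apply, Fin.sum_univ_two, hn] <;> field_simp
    all_goals try ring

lemma psd2_inv {X : M2} (h : X.PosSemidef) : ∃ (a d : ℝ) (c : ℂ),
    X = !![(a : ℂ), c; star c, (d : ℂ)] ∧ 0 ≤ a ∧ 0 ≤ d ∧ Complex.normSq c ≤ a * d := by
  have h0 := h.diag_nonneg (i := 0)
  have h1 := h.diag_nonneg (i := 1)
  have hd := h.det_nonneg
  obtain ⟨a, ha, ha'⟩ : ∃ a : ℝ, 0 ≤ a ∧ X 0 0 = a := by
    obtain ⟨x, y⟩ := Complex.nonneg_iff.1 h0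
    exact ⟨_, x, Complex.ext rfl (by simp [← y])⟩
  obtain ⟨d, hd0, hd'⟩ : ∃ a : ℝ, 0 ≤ a ∧ X 1 1 = a := by
    obtain ⟨x, y⟩ := Complex.nonneg_iff.1 h1
    exact ⟨_, x, Complex.ext rfl (by simp [← y])⟩
  have h10 : X 1 0 = star (X 0 1) := (h.1.apply 1 0).symm
  refine ⟨a, d, X 0 1, ?_, ha, hd0, ?_⟩
  · ext i j; fin_cases i <;> fin_cases j <;> simp [ha', hd', h10]
  · rw [det_fin_two, ha', hd', h10] at hd
    have hn : X 0 1 * star (X 0 1) = ((Complex.normSq (X 0 1) : ℝ) : ℂ) := Complex.mul_conj _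
    rw [hn] at hd
    have : (0:ℂ) ≤ ((a * d - Complex.normSq (X 0 1) : ℝ) : ℂ) := by push_cast; exact hd
    have := Complex.zero_le_real.1 this
    linarith

def Good (Q : M2 → Prop) (A B C : M2) : Prop :=
  Q B → (blk A B C).PosSemidef → (blk A Bᴴ C).PosSemidef → Sp (blk A B C)

lemma good_conj {Q : M2 → Prop} (hQ : ∀ G B, Q B → Q (G * B * Gᴴ)) {G G' : M2} (hG : G * G' = 1)
    {A B C : M2} (h : Good Q (G' * A * G'ᴴ) (G' * B * G'ᴴ) (G' * C * G'ᴴ)) : Good Q A B C := by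
  intro h1 h2 h3
  have h2' := h2.mul_mul_conjTranspose_same ((1 : M2) ⊗ₖ G')
  have h3' := h3.mul_mul_conjTranspose_same ((1 : M2) ⊗ₖ G')
  rw [blk_conj] at h2' h3'
  have hs := (h (hQ _ _ h1) h2' (by
    simpa [conjTranspose_mul, Matrix.mul_assoc] using h3')).conj 1 G
  rw [blk_conj] at hs
  have hG' : G'ᴴ * Gᴴ = 1 := by rw [← conjTranspose_mul, hG, conjTranspose_one]
  have key : ∀ X : M2, G * (G' * X * G'ᴴ) * Gᴴ = X := by
    intro X
    calc _ = (G * G') * X * (G'ᴴ * Gᴴ) := by simp only [Matrix.mul_assoc]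
      _ = X := by rw [hG, hG']; simp
  simpa only [key] using hs

lemma psd_zero {n : Type} [Fintype n] {M : Matrix n n ℂ} (h : M.PosSemidef) {p q : n}
    (hp : M p p = 0) : M p q = 0 := by
  obtain ⟨a, d, c, h1, ha, hd, hc⟩ := psd2_inv (h.submatrix ![p, q])
  have e00 := congrFun (congrFun h1 0) 0
  have e01 := congrFun (congrFun h1 0) 1
  simp at e00 e01
  rw [hp] at e00
  have : a = 0 := by exact_mod_cast e00.symm
  subst this
  rw [zero_mul] at hc
  rw [e01]
  exact Complex.normSq_eq_zero.1 (le_antisymm hc (Complex.normSq_nonneg _))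

lemma e00_psd : (!![1, 0; 0, 0] : M2).PosSemidef := by
  rw [← diag2, posSemidef_diagonal_iff]; intro i; fin_cases i <;> simp

lemma e11_psd : (!![0, 0; 0, 1] : M2).PosSemidef := by
  rw [← diag2, posSemidef_diagonal_iff]; intro i; fin_cases i <;> simp

lemma good_sing {Q : M2 → Prop} (a : ℝ) (ha : 0 ≤ a) (B C : M2) :
    Good Q !![(a : ℂ), 0; 0, 0] B C := by
  intro _ h2 h3
  have b10 : B 1 0 = 0 := by
    simpa [blk] using psd_zero h2 (p := (0, 1)) (q := (1, 0)) (by simp [blk])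
  have b11 : B 1 1 = 0 := by
    simpa [blk] using psd_zero h2 (p := (0, 1)) (q := (1, 1)) (by simp [blk])
  have b01 : B 0 1 = 0 := by
    simpa [blk] using psd_zero h3 (p := (0, 1)) (q := (1, 0)) (by simp [blk])
  obtain ⟨b, hb⟩ : ∃ b, B 0 0 = b := ⟨_, rfl⟩
  have hB : B = !![b, 0; 0, 0] := by
    ext i j; fin_cases i <;> fin_cases j <;> simp [*]
  rcases ha.eq_or_lt with rfl | ha
  · have b00 : B 0 0 = 0 := by
      simpa [blk] using psd_zero h2 (p := (0, 0)) (q := (1, 0)) (by simp [blk])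
    have hC : C.PosSemidef := h2.submatrix (fun k => ((1 : Fin 2), k))
    have : blk !![((0 : ℝ) : ℂ), 0; 0, 0] B C = !![0, 0; 0, 1] ⊗ₖ C := by
      ext ⟨i, k⟩ ⟨j, l⟩
      fin_cases i <;> fin_cases j <;> fin_cases k <;> fin_cases l <;>
        simp [blk, b00, b01, b10, b11]
    rw [this]
    exact Sp.prod e11_psd hC
  · have ha' : (a : ℂ) ≠ 0 := by exact_mod_cast ha.ne'
    have hA : (!![(a : ℂ), 0; 0, 1] : M2).PosDef := by
      rw [← diag2, posDef_diagonal_iff]; intro i; fin_cases i <;> simp [ha]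
    have hp : (blk !![(a : ℂ), 0; 0, 1] B C).PosSemidef := by
      convert h2.add (e00_psd.kronecker e11_psd) using 1
      ext ⟨i, k⟩ ⟨j, l⟩
      fin_cases i <;> fin_cases j <;> fin_cases k <;> fin_cases l <;> simp [blk]
    rw [blk_schur hA] at hp
    have hinv : (!![(a : ℂ), 0; 0, 1] : M2)⁻¹ = !![(a : ℂ)⁻¹, 0; 0, 1] := by
      apply Matrix.inv_eq_left_inv
      ext i j; fin_cases i <;> fin_cases j <;> simp [ha']
    rw [hinv] at hp
    have hX : (!![(a : ℂ), b; star b, ((Complex.normSq b / a : ℝ) : ℂ)] : M2).PosSemidef :=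
      psd2 ha.le (div_nonneg (Complex.normSq_nonneg _) ha.le) (by field_simp; exact le_rfl)
    have : blk !![(a : ℂ), 0; 0, 0] B C =
        !![(a : ℂ), b; star b, ((Complex.normSq b / a : ℝ) : ℂ)] ⊗ₖ !![1, 0; 0, 0]
        + !![0, 0; 0, 1] ⊗ₖ (C - Bᴴ * !![(a : ℂ)⁻¹, 0; 0, 1] * B) := by
      have hn : ((Complex.normSq b : ℝ) : ℂ) = star b * b := Complex.normSq_eq_conj_mul_self
      subst hB
      ext ⟨i, k⟩ ⟨j, l⟩
      fin_cases i <;> fin_cases j <;> fin_cases k <;> fin_cases l <;>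
        simp [blk, hn, Matrix.mul_apply, Fin.sum_univ_two]
      all_goals try ring
    rw [this]
    exact (Sp.prod hX e00_psd).add (Sp.prod e11_psd hp)

lemma spectral {A : M2} (hA : A.IsHermitian) : ∃ (U : M2) (x y : ℝ),
    U * Uᴴ = 1 ∧ Uᴴ * U = 1 ∧ A = U * !![(x : ℂ), 0; 0, (y : ℂ)] * Uᴴ := by
  refine ⟨hA.eigenvectorUnitary, hA.eigenvalues 0, hA.eigenvalues 1, ?_, ?_, ?_⟩
  · exact Unitary.coe_mul_star_self _
  · exact Unitary.coe_star_mul_self _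
  · conv_lhs => rw [hA.spectral_theorem]
    rw [Unitary.conjStarAlgAut_apply, ← diag2]
    congr 3
    ext i; fin_cases i <;> simp

lemma unit_cancel {U D : M2} (h : Uᴴ * U = 1) : Uᴴ * (U * D * Uᴴ) * U = D := by
  calc _ = (Uᴴ * U) * D * (Uᴴ * U) := by simp only [Matrix.mul_assoc]
    _ = D := by rw [h]; simp

lemma good_all {Q : M2 → Prop} (hQ : ∀ G B, Q B → Q (G * B * Gᴴ))
    (h : ∀ B C, Good Q 1 B C) (A B C : M2) : Good Q A B C := by
  intro h1 h2 h3
  have hA : A.PosSemidef := h2.submatrix (fun k => ((0 : Fin 2), k))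
  suffices Good Q A B C from this h1 h2 h3
  by_cases hd : A.PosDef
  · open MatrixOrder in
    obtain ⟨y, hy, hAy⟩ := CStarAlgebra.isStrictlyPositive_iff_eq_star_mul_self.mp
      (isStrictlyPositive_iff_posDef.2 hd)
    rw [star_eq_conjTranspose] at hAy
    have hdet : IsUnit y.det := (Matrix.isUnit_iff_isUnit_det y).1 hy
    have e1 : y * y⁻¹ = 1 := Matrix.mul_nonsing_inv _ hdet
    have e2 : (y⁻¹)ᴴ * yᴴ = 1 := by rw [← conjTranspose_mul, e1, conjTranspose_one]
    have e3 : yᴴ * (y⁻¹)ᴴ = 1 := mul_eq_one_comm.1 e2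
    refine good_conj hQ (G := yᴴ) (G' := (y⁻¹)ᴴ) e3 ?_
    have : (y⁻¹)ᴴ * A * (y⁻¹)ᴴᴴ = 1 := by
      rw [hAy, conjTranspose_conjTranspose, ← Matrix.mul_assoc, e2, Matrix.one_mul, e1]
    rw [this]
    exact h _ _
  · obtain ⟨U, x, y, hU, hU', hAU⟩ := spectral hA.1
    refine good_conj hQ (G := U) (G' := Uᴴ) hU ?_
    rw [conjTranspose_conjTranspose]
    have hAd : Uᴴ * A * U = !![(x : ℂ), 0; 0, (y : ℂ)] := by rw [hAU, unit_cancel hU']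
    have hp : (!![(x : ℂ), 0; 0, (y : ℂ)] : M2).PosSemidef := by
      rw [← hAd]; exact hA.conjTranspose_mul_mul_same U
    rw [hAd]
    have hx : 0 ≤ x := by simpa using hp.diag_nonneg (i := 0)
    have hy : 0 ≤ y := by simpa using hp.diag_nonneg (i := 1)
    rcases hy.eq_or_lt with rfl | hy
    · exact good_sing x hx _ _
    rcases hx.eq_or_lt with rfl | hx
    · refine good_conj hQ (G := !![0, 1; 1, 0]) (G' := !![0, 1; 1, 0]) ?_ ?_
      · ext i j; fin_cases i <;> fin_cases j <;> simp
      · have : (!![0, 1; 1, 0] : M2) * !![((0 : ℝ) : ℂ), 0; 0, (y : ℂ)] * (!![0, 1; 1, 0] : M2)ᴴ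
            = !![(y : ℂ), 0; 0, 0] := by
          ext i j; fin_cases i <;> fin_cases j <;> simp [Matrix.mul_apply, Fin.sum_univ_two]
        rw [this]
        exact good_sing y hy.le _ _
    · exfalso
      apply hd
      have h1 : (!![(x : ℂ), 0; 0, (y : ℂ)] : M2).PosDef := by
        rw [← diag2, posDef_diagonal_iff]; intro i; fin_cases i <;> simp [hx, hy]
      rw [hA.posDef_iff_det_ne_zero, hAU, det_mul, det_mul]
      rw [hp.posDef_iff_det_ne_zero] at h1
      have := congrArg det hU
      rw [det_mul, det_one] at this
      refine mul_ne_zero (mul_ne_zero ?_ h1) ?_ <;> intro h0 <;> simp [h0] at this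

lemma blk_herm {A H C : M2} (hH : H.IsHermitian) (h : (blk A H C).PosSemidef) :
    Sp (blk A H C) := by
  refine good_all (Q := IsHermitian) ?_ ?_ A H C hH h (by rw [hH.eq]; exact h)
  · intro G B hB
    exact isHermitian_mul_mul_conjTranspose G hB
  · intro H C hH h _
    rw [blk_schur1, hH.eq] at h
    obtain ⟨U, x, y, hU, hU', hAU⟩ := spectral hH
    have key : blk 1 H C = ((1 : M2) ⊗ₖ U) * (!![((1:ℝ):ℂ), (x:ℂ); star (x : ℂ), ((x * x : ℝ) : ℂ)] ⊗ₖ !![1, 0; 0, 0] +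
       !![((1:ℝ):ℂ), (y:ℂ); star (y : ℂ), ((y * y : ℝ) : ℂ)] ⊗ₖ !![0, 0; 0, 1]) * ((1 : M2) ⊗ₖ U)ᴴ
        + !![0, 0; 0, 1] ⊗ₖ (C - H * H) := by
      have e1 : (!![((1:ℝ):ℂ), (x:ℂ); star (x : ℂ), ((x * x : ℝ) : ℂ)] ⊗ₖ !![1, 0; 0, 0] +
       !![((1:ℝ):ℂ), (y:ℂ); star (y : ℂ), ((y * y : ℝ) : ℂ)] ⊗ₖ !![0, 0; 0, 1] : M4)
        = blk 1 !![(x : ℂ), 0; 0, (y : ℂ)]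
          (!![(x : ℂ), 0; 0, (y : ℂ)] * !![(x : ℂ), 0; 0, (y : ℂ)]) := by
        ext ⟨i, k⟩ ⟨j, l⟩
        fin_cases i <;> fin_cases j <;> fin_cases k <;> fin_cases l <;>
          simp [blk]
      have e2 : U * (!![(x : ℂ), 0; 0, (y : ℂ)] * !![(x : ℂ), 0; 0, (y : ℂ)]) * Uᴴ = H * H := by
        rw [hAU]
        calc _ = U * !![(x : ℂ), 0; 0, (y : ℂ)] * 1 * !![(x : ℂ), 0; 0, (y : ℂ)] * Uᴴ := by
              simp only [Matrix.mul_assoc, Matrix.one_mul]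
          _ = _ := by rw [← hU']; simp only [Matrix.mul_assoc]
      rw [e1, blk_conj, ← hAU, e2, Matrix.mul_one, hU]
      ext ⟨i, k⟩ ⟨j, l⟩
      fin_cases i <;> fin_cases j <;> simp [blk]
    rw [key]
    refine Sp.add (Sp.conj (Sp.add ?_ ?_) _ _) (Sp.prod e11_psd h)
    · exact Sp.prod (psd2 zero_le_one (mul_self_nonneg x) (by simp)) e00_psd
    · exact Sp.prod (psd2 zero_le_one (mul_self_nonneg y) (by simp)) e11_psd

lemma scalar_aux {a d g b n : ℝ} (hda : d ≤ a) (hgb : g ≤ b) (hn : 0 ≤ n)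
    (h2 : b ≤ d) (h3 : n ≤ (a - g) * (d - b)) :
    ∃ s t : ℝ, s ≤ a ∧ s ≤ d ∧ (1 - t) ^ 2 * n ≤ (a - s) * (d - s) ∧ g ≤ s ∧ b ≤ s ∧
      t ^ 2 * n ≤ (s - g) * (s - b) := by
  by_cases h : n ≤ (d - g) * (d - b)
  · exact ⟨d, 1, hda, le_rfl, by simp, by linarith, h2, by linarith⟩
  · push Not at h
    have hy : 0 < d - b := by
      rcases h2.eq_or_lt with rfl | h2
      · simp at h h3; linarith
      · linarith
    obtain ⟨x, hx⟩ : ∃ x, n = x * (d - b) := ⟨n / (d - b), by field_simp⟩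
    subst hx
    have hx1 : d - g < x := lt_of_mul_lt_mul_right h hy.le
    have hx2 : x ≤ a - g := le_of_mul_le_mul_right h3 hy
    have hz : 0 < x - (d - b) := by linarith
    obtain ⟨t, ht⟩ : ∃ t, t * (x - (d - b)) = b - g := ⟨(b - g) / (x - (d - b)), by field_simp⟩
    have ht0 : 0 ≤ t := by
      by_contra hc
      push Not at hc
      nlinarith
    have ht1 : t ≤ 1 := by
      by_contra hc
      push Not at hc
      nlinarith
    have hs : b + t * (d - b) = g + t * x := by linarith
    have e1 : b + t * (d - b) ≤ d := by nlinarith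
    refine ⟨b + t * (d - b), t, by linarith, e1, ?_, by nlinarith, by nlinarith, ?_⟩
    · have e2 : d - (b + t * (d - b)) = (1 - t) * (d - b) := by ring
      have e3 : (1 - t) * x ≤ a - (b + t * (d - b)) := by rw [hs]; nlinarith
      rw [e2]
      have := mul_le_mul_of_nonneg_right e3 (mul_nonneg (sub_nonneg.2 ht1) hy.le)
      nlinarith
    · rw [show b + t * (d - b) - b = t * (d - b) by ring, hs]
      apply le_of_eq; ring

lemma scalar {a d g b n : ℝ} (hn : 0 ≤ n) (h1 : g ≤ a) (h2 : b ≤ d) (h3 : n ≤ (a - g) * (d - b))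
    (h4 : b ≤ a) (h5 : g ≤ d) (h6 : n ≤ (a - b) * (d - g)) :
    ∃ s t : ℝ, s ≤ a ∧ s ≤ d ∧ (1 - t) ^ 2 * n ≤ (a - s) * (d - s) ∧ g ≤ s ∧ b ≤ s ∧
      t ^ 2 * n ≤ (s - g) * (s - b) := by
  rcases le_total d a with hda | hda <;> rcases le_total g b with hgb | hgb
  · exact scalar_aux hda hgb hn h2 h3
  · obtain ⟨s, t, x1, x2, x3, x4, x5, x6⟩ := scalar_aux hda hgb hn h5 h6
    exact ⟨s, t, x1, x2, x3, x5, x4, by linarith⟩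
  · obtain ⟨s, t, x1, x2, x3, x4, x5, x6⟩ := scalar_aux hda hgb hn h4 (by linarith)
    exact ⟨s, t, x2, x1, by linarith, x4, x5, x6⟩
  · obtain ⟨s, t, x1, x2, x3, x4, x5, x6⟩ := scalar_aux hda hgb hn h1 (by linarith)
    exact ⟨s, t, x2, x1, by linarith, x5, x4, by linarith⟩

lemma toeplitz_sp {β γ c : ℂ} {s : ℝ}
    (h : (blk 1 !![0, β; γ, 0] !![(s : ℂ), c; star c, (s : ℂ)]).PosSemidef) :
    Sp (blk 1 !![0, β; γ, 0] !![(s : ℂ), c; star c, (s : ℂ)]) := by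
  set ρ := blk 1 !![0, β; γ, 0] !![(s : ℂ), c; star c, (s : ℂ)] with hρ
  let V : M2 := !![1, 1; Complex.I, -Complex.I]
  let V' : M2 := !![1 / 2, -Complex.I / 2; 1 / 2, Complex.I / 2]
  have hV : V' * V = 1 := by
    ext i j; fin_cases i <;> fin_cases j <;>
      simp [V, V', Matrix.mul_apply, Fin.sum_univ_two] <;> ring_nf <;> simp <;> ring_nf
  have hp := h.mul_mul_conjTranspose_same ((1 : M2) ⊗ₖ V)
  have hsw := hp.submatrix Prod.swap
  have e : ((1 : M2) ⊗ₖ V * ρ * ((1 : M2) ⊗ₖ V)ᴴ).submatrix Prod.swap Prod.swap =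
      blk !![2, β + γ; star β + star γ, 2 * s + c + star c]
        !![0, Complex.I * (β - γ); Complex.I * (star γ - star β), Complex.I * (c - star c)]
        !![2, -(β + γ); -(star β + star γ), 2 * s - c - star c] := by
    rw [hρ, blk_conj]
    ext ⟨i, k⟩ ⟨j, l⟩
    fin_cases i <;> fin_cases j <;> fin_cases k <;> fin_cases l <;>
      simp [blk, V, Matrix.mul_apply, Fin.sum_univ_two, Matrix.vecMul, dotProduct] <;>
      ring_nf <;> simp <;> ring_nf
  rw [e] at hsw
  have hs := blk_herm (by
    ext i j; fin_cases i <;> fin_cases j <;> simp <;> ring) hsw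
  rw [← e] at hs
  have := (Sp.swap hs).conj 1 V'
  have e2 : ((1 : M2) ⊗ₖ V') * ((1 : M2) ⊗ₖ V) = 1 := by
    rw [← mul_kronecker_mul, hV, Matrix.one_mul, one_kronecker_one]
  have e3 : ((1 : M2) ⊗ₖ V)ᴴ * ((1 : M2) ⊗ₖ V')ᴴ = 1 := by
    rw [← conjTranspose_mul, e2, conjTranspose_one]
  have e4 : ((1 : M2) ⊗ₖ V') * (((1 : M2) ⊗ₖ V) * ρ * ((1 : M2) ⊗ₖ V)ᴴ) * ((1 : M2) ⊗ₖ V')ᴴ = ρ := by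
    calc _ = (((1 : M2) ⊗ₖ V') * ((1 : M2) ⊗ₖ V)) * ρ *
          (((1 : M2) ⊗ₖ V)ᴴ * ((1 : M2) ⊗ₖ V')ᴴ) := by simp only [Matrix.mul_assoc]
      _ = ρ := by rw [e2, e3]; simp
  rwa [e4] at this

lemma core {β γ : ℂ} {C : M2} (h1 : (blk 1 !![0, β; γ, 0] C).PosSemidef)
    (h2 : (blk 1 (!![0, β; γ, 0])ᴴ C).PosSemidef) : Sp (blk 1 !![0, β; γ, 0] C) := by
  rw [blk_schur1] at h1 h2
  have nb : ((Complex.normSq β : ℝ) : ℂ) = star β * β := Complex.normSq_eq_conj_mul_self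
  have ng : ((Complex.normSq γ : ℝ) : ℂ) = star γ * γ := Complex.normSq_eq_conj_mul_self
  have e1 : (!![0, β; γ, 0] : M2)ᴴ * !![0, β; γ, 0] =
      !![((Complex.normSq γ : ℝ) : ℂ), 0; 0, ((Complex.normSq β : ℝ) : ℂ)] := by
    rw [nb, ng]
    ext i j; fin_cases i <;> fin_cases j <;> simp [Matrix.mul_apply, Fin.sum_univ_two]
  have e2 : (!![0, β; γ, 0] : M2)ᴴᴴ * (!![0, β; γ, 0] : M2)ᴴ =
      !![((Complex.normSq β : ℝ) : ℂ), 0; 0, ((Complex.normSq γ : ℝ) : ℂ)] := by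
    rw [nb, ng]
    ext i j; fin_cases i <;> fin_cases j <;>
      simp [Matrix.mul_apply, Fin.sum_univ_two, mul_comm]
  rw [e1] at h1
  rw [e2] at h2
  obtain ⟨a1, d1, c, hX, ha1, hd1, hc⟩ := psd2_inv h1
  obtain ⟨a2, d2, c2, hX2, ha2, hd2, hc2⟩ := psd2_inv h2
  set g := Complex.normSq γ
  set b := Complex.normSq β
  have hC : C = !![((a1 + g : ℝ) : ℂ), c; star c, ((d1 + b : ℝ) : ℂ)] := by
    rw [sub_eq_iff_eq_add.1 hX]
    ext i j; fin_cases i <;> fin_cases j <;> simp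
  rw [hC] at hX2
  have f00 := congrFun (congrFun hX2 0) 0
  have f01 := congrFun (congrFun hX2 0) 1
  have f11 := congrFun (congrFun hX2 1) 1
  simp at f00 f01 f11
  subst f01
  have ga : a2 = a1 + g - b := by exact_mod_cast f00.symm
  have gd : d2 = d1 + b - g := by exact_mod_cast f11.symm
  obtain ⟨s, t, x1, x2, x3, x4, x5, x6⟩ := scalar (a := a1 + g) (d := d1 + b) (g := g) (b := b)
    (Complex.normSq_nonneg c) (by linarith) (by linarith) (by simpa using hc) (by linarith)
    (by linarith) (by rw [← ga, ← gd]; exact hc2)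
  have p1 : (!![((s - g : ℝ) : ℂ), (t : ℂ) * c; star ((t : ℂ) * c), ((s - b : ℝ) : ℂ)] : M2).PosSemidef :=
    psd2 (by linarith) (by linarith) (by
      rw [Complex.normSq_mul, Complex.normSq_ofReal]; linarith)
  have p2 : (!![((a1 + g - s : ℝ) : ℂ), ((1 - t : ℝ) : ℂ) * c; star (((1 - t : ℝ) : ℂ) * c),
      ((d1 + b - s : ℝ) : ℂ)] : M2).PosSemidef :=
    psd2 (by linarith) (by linarith) (by
      rw [Complex.normSq_mul, Complex.normSq_ofReal]; linarith)
  have p3 : (blk 1 !![0, β; γ, 0] !![(s : ℂ), (t : ℂ) * c; star ((t : ℂ) * c), (s : ℂ)]).PosSemidef := by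
    rw [blk_schur1, e1]
    convert p1 using 1
    ext i j; fin_cases i <;> fin_cases j <;> simp
  have : blk 1 !![0, β; γ, 0] C =
      blk 1 !![0, β; γ, 0] !![(s : ℂ), (t : ℂ) * c; star ((t : ℂ) * c), (s : ℂ)] +
      !![0, 0; 0, 1] ⊗ₖ !![((a1 + g - s : ℝ) : ℂ), ((1 - t : ℝ) : ℂ) * c;
        star (((1 - t : ℝ) : ℂ) * c), ((d1 + b - s : ℝ) : ℂ)] := by
    rw [hC]
    ext ⟨i, k⟩ ⟨j, l⟩
    fin_cases i <;> fin_cases j <;> fin_cases k <;> fin_cases l <;> simp [blk] <;> ring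
  rw [this]
  exact (toeplitz_sp p3).add (Sp.prod e11_psd p2)

lemma exists_w (x y z : ℂ) : ∃ w : ℂ, x * (1 - w * star w) + y * w + z * star w = 0 := by
  by_cases hx : x = 0
  · exact ⟨0, by simp [hx]⟩
  obtain ⟨y, rfl⟩ : ∃ y', y = x * y' := ⟨y / x, by field_simp⟩
  obtain ⟨z, rfl⟩ : ∃ z', z = x * z' := ⟨z / x, by field_simp⟩
  obtain ⟨u, r, hu, hr⟩ : ∃ (u : ℂ) (r : ℝ), u * star u = 1 ∧ y * u + z * star u = r := by
    by_cases hg : star y - z = 0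
    · refine ⟨1, 2 * y.re, by simp, ?_⟩
      rw [← sub_eq_zero.1 hg]
      apply Complex.ext <;> simp; ring
    · set G := star y - z with hG
      have hn : ((‖G‖ : ℝ) : ℂ) ≠ 0 := by exact_mod_cast norm_ne_zero_iff.2 hg
      have h2 : G * star G = (‖G‖ : ℂ) ^ 2 := Complex.mul_conj' G
      refine ⟨G / ‖G‖, (Complex.normSq y - Complex.normSq z) / ‖G‖, ?_, ?_⟩
      · simp only [star_div₀, Complex.star_def, Complex.conj_ofReal] at h2 ⊢
        field_simp
        rw [h2]
      · simp only [star_div₀, Complex.star_def, Complex.conj_ofReal, Complex.ofReal_div,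
          Complex.ofReal_sub, Complex.normSq_eq_conj_mul_self] at *
        field_simp
        rw [hG]
        simp
        ring
  have hsq : Real.sqrt (r ^ 2 + 4) ^ 2 = r ^ 2 + 4 := Real.sq_sqrt (by positivity)
  obtain ⟨τ, hτ⟩ : ∃ τ : ℝ, 1 - τ ^ 2 + r * τ = 0 :=
    ⟨(r + Real.sqrt (r ^ 2 + 4)) / 2, by nlinarith⟩
  have hτ' : (1 : ℂ) - (τ : ℂ) ^ 2 + r * τ = 0 := by exact_mod_cast hτ
  refine ⟨τ * u, ?_⟩
  have : star ((τ : ℂ) * u) = τ * star u := by simp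
  rw [this]
  linear_combination x * hτ' - x * τ ^ 2 * hu + x * τ * hr

lemma exists_unitary {B : M2} (hB : B 0 0 + B 1 1 = 0) : ∃ (U : M2) (β γ : ℂ),
    U * Uᴴ = 1 ∧ U * B * Uᴴ = !![0, β; γ, 0] := by
  obtain ⟨w, hw⟩ := exists_w (B 0 0) (B 0 1) (B 1 0)
  have h11 : B 1 1 = - B 0 0 := by linear_combination hB
  obtain ⟨N, hN⟩ : ∃ N : ℝ, (N : ℂ) ^ 2 * (1 + w * star w) = 1 := by
    refine ⟨(Real.sqrt (1 + Complex.normSq w))⁻¹, ?_⟩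
    have hpos : 0 < 1 + Complex.normSq w := by have := Complex.normSq_nonneg w; linarith
    have h1 : w * star w = (Complex.normSq w : ℂ) := Complex.mul_conj w
    rw [h1]
    have : ((Real.sqrt (1 + Complex.normSq w))⁻¹) ^ 2 * (1 + Complex.normSq w) = 1 := by
      rw [inv_pow, Real.sq_sqrt hpos.le]; field_simp
    exact_mod_cast this
  let U : M2 := !![(N : ℂ), N * star w; - (N * w), N]
  refine ⟨U, (U * B * Uᴴ) 0 1, (U * B * Uᴴ) 1 0, ?_, ?_⟩
  · simp only [Complex.star_def] at hN
    ext i j; fin_cases i <;> fin_cases j <;>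
      simp [U, Matrix.mul_apply, Fin.sum_univ_two]
    · linear_combination hN
    · ring
    · ring
    · linear_combination hN
  · simp only [Complex.star_def] at hw
    ext i j; fin_cases i <;> fin_cases j
    · simp [U, Matrix.mul_apply, Fin.sum_univ_two, Matrix.vecMul, dotProduct, h11]
      linear_combination (N : ℂ) ^ 2 * hw
    · simp
    · simp
    · simp [U, Matrix.mul_apply, Fin.sum_univ_two, Matrix.vecMul, dotProduct, h11]
      linear_combination - (N : ℂ) ^ 2 * hw

lemma good_traceless {B : M2} (hB : B 0 0 + B 1 1 = 0) (C : M2) : Good (fun _ => True) 1 B C := by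
  obtain ⟨U, β, γ, hU, hUB⟩ := exists_unitary hB
  refine good_conj (by simp) (G := Uᴴ) (G' := U) (mul_eq_one_comm.1 hU) ?_
  rw [hUB, Matrix.mul_one, hU]
  intro _ h1 h2
  exact core h1 h2

lemma good_one (B C : M2) : Good (fun _ => True) 1 B C := by
  intro _ h1 h2
  rw [blk_schur1] at h1 h2
  obtain ⟨t, ht⟩ : ∃ t : ℂ, t = (B 0 0 + B 1 1) / 2 := ⟨_, rfl⟩
  have hB0 : (B - t • (1 : M2)) 0 0 + (B - t • (1 : M2)) 1 1 = 0 := by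
    simp [ht]; ring
  have hs := good_traceless hB0 (C - star t • B - t • Bᴴ + (t * star t) • 1) trivial ?_ ?_
  · have := hs.conj !![1, 0; star t, 1] 1
    rw [blk_conj1] at this
    convert this using 2
    · simp
    · ext i j
      fin_cases i <;> fin_cases j <;> simp <;> ring
  · rw [blk_schur1]
    convert h1 using 1
    ext i j
    fin_cases i <;> fin_cases j <;> simp [Matrix.mul_apply, Fin.sum_univ_two] <;> ring
  · rw [blk_schur1]
    convert h2 using 1
    ext i j
    fin_cases i <;> fin_cases j <;> simp [Matrix.mul_apply, Fin.sum_univ_two] <;> ring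

lemma ppt_sp {A B C : M2} (h1 : (blk A B C).PosSemidef) (h2 : (blk A Bᴴ C).PosSemidef) :
    Sp (blk A B C) :=
  good_all (by simp) good_one A B C trivial h1 h2

lemma one_sub_psd {Q : M2} (hQ : IsDensity Q) : (1 - Q).PosSemidef := by
  obtain ⟨a, d, c, rfl, ha, hd, hc⟩ := psd2_inv hQ.1
  have ht := hQ.2
  rw [trace_fin_two] at ht
  simp at ht
  have ht' : a + d = 1 := by exact_mod_cast ht
  have := psd2 (c := -c) hd ha (by rw [Complex.normSq_neg]; linarith)
  convert this using 1
  ext i j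
  fin_cases i <;> fin_cases j <;> simp
  · linear_combination -ht
  · linear_combination -ht

/-- The reduction criterion for two qubits: `ρ` is separable iff `ρ¹ ⊗ I₂ − ρ` is
positive semidefinite. -/
theorem stmt13 (ρ : Matrix (Fin 2 × Fin 2) (Fin 2 × Fin 2) ℂ) (hρ : IsDensity ρ) :
    Separable ρ ↔
      ((ptrace2 ρ) ⊗ₖ (1 : Matrix (Fin 2) (Fin 2) ℂ) - ρ).PosSemidef := by
  constructor
  · rintro ⟨k, lam, P, Q, hl, hl1, hP, hQ, rfl⟩
    have : (ptrace2 (∑ i, (lam i : ℂ) • (P i ⊗ₖ Q i))) ⊗ₖ (1 : Matrix (Fin 2) (Fin 2) ℂ) -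
        ∑ i, (lam i : ℂ) • (P i ⊗ₖ Q i) = ∑ i, (lam i : ℂ) • (P i ⊗ₖ (1 - Q i)) := by
      ext ⟨i, k⟩ ⟨j, l⟩
      have hq : ∀ x, Q x 0 0 + Q x 1 1 = 1 := fun x => by
        have := (hQ x).2; rwa [trace_fin_two] at this
      simp only [ptrace2, Matrix.sub_apply, kronecker_apply, Matrix.sum_apply, of_apply,
        Matrix.smul_apply, Fin.sum_univ_two, smul_eq_mul]
      rw [← Finset.sum_add_distrib, Finset.sum_mul, ← Finset.sum_sub_distrib]
      refine Finset.sum_congr rfl fun x _ => ?_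
      linear_combination (lam x : ℂ) * P x i j * (1 : Matrix (Fin 2) (Fin 2) ℂ) k l * hq x
    rw [this]
    exact posSemidef_sum _ fun i _ => ((hP i).1.kronecker (one_sub_psd (hQ i))).smul
      (by exact_mod_cast hl i)
  · intro h
    obtain ⟨A, B, C, rfl⟩ : ∃ A B C, ρ = blk A B C := by
      refine ⟨of fun k l => ρ (0, k) (0, l), of fun k l => ρ (0, k) (1, l),
        of fun k l => ρ (1, k) (1, l), ?_⟩
      ext ⟨i, k⟩ ⟨j, l⟩
      fin_cases i <;> fin_cases j <;> simp [blk]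
      exact (hρ.1.1.apply _ _).symm
    refine Sp.separable (ppt_sp hρ.1 ?_) hρ.2
    have h2 := (h.mul_mul_conjTranspose_same ((1 : M2) ⊗ₖ !![0, 1; -1, 0])).transpose
    suffices e : blk A Bᴴ C = (((1 : M2) ⊗ₖ !![0, 1; -1, 0]) *
        ((ptrace2 (blk A B C)) ⊗ₖ (1 : M2) - blk A B C) * ((1 : M2) ⊗ₖ !![0, 1; -1, 0])ᴴ)ᵀ by
      rw [e]; exact h2
    ext ⟨i, k⟩ ⟨j, l⟩
    fin_cases i <;> fin_cases j <;> fin_cases k <;> fin_cases l <;>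
      simp [blk, ptrace2, Matrix.mul_apply, Fintype.sum_prod_type, Fin.sum_univ_two]
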